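/- arXiv:2105.01887 — 3 statements merged into one kernel-verified Lean document; each statement's English description precedes it below -/
import Mathlib

section
/- Let I ⊆ ℝ be an open interval, let λ : I → ℝ be smooth with λ(u) > 0 for all u ∈ I, let b > 0, and define K(u) = (−λ(u)·λ''(u) + λ'(u)²)/λ(u)⁴. Assume −2b² − K(u) > 0 on I and that the Ricci condition (1/λ(u)²)·(d²/du²)[log √(−2b² − K(u))] = 2K(u) holds on I. Then there exist constants c₁ > 0 and c₂ ∈ ℝ such that λ(u)⁴·(−2b² − K(u)) = c₁·exp(c₂·u) for all u ∈ I. -/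
/-!
With `K` the Gaussian curvature of `lam(u)² (du² + dv²)`, one has `(log lam)'' = -lam² K`, so the
Ricci condition says that `log √(c - K)` and `-2 log lam` have the same second derivative. They
therefore differ by an affine function of `u`, and exponentiating twice their difference gives
`lam⁴ (c - K) = c₁ exp (c₂ u)`.
-/

theorem exists_eqOn_add_affine_of_deriv_deriv_eqOn {𝕜 E : Type*} [RCLike 𝕜] [NormedAddCommGroup E]
    [NormedSpace 𝕜 E] {s : Set 𝕜} {f g : 𝕜 → E} (hs : IsOpen s) (hs' : IsPreconnected s)
    (hf : ContDiffOn 𝕜 2 f s) (hg : ContDiffOn 𝕜 2 g s)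
    (h : s.EqOn (deriv (deriv f)) (deriv (deriv g))) :
    ∃ a b : E, s.EqOn f fun x ↦ g x + (x • a + b) := by
  have differentiableOn_deriv {k : 𝕜 → E} (hk : ContDiffOn 𝕜 2 k s) :
      DifferentiableOn 𝕜 (deriv k) s :=
    (hk.deriv_of_isOpen (m := 1) hs (by norm_num)).differentiableOn one_ne_zero
  have hg' := hg.differentiableOn two_ne_zero
  obtain ⟨a, ha⟩ := hs.exists_eq_add_of_deriv_eq hs' (differentiableOn_deriv hf)
    (differentiableOn_deriv hg) h
  have deriv_add_linear : s.EqOn (deriv f) (deriv fun x ↦ g x + x • a) := fun x hx ↦ by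
    have hgx := (hg'.differentiableAt (hs.mem_nhds hx)).hasDerivAt
    rw [ha hx, (hgx.fun_add ((hasDerivAt_id' x).smul_const a)).deriv, one_smul]
  obtain ⟨b, hb⟩ := hs.exists_eq_add_of_deriv_eq hs' (hf.differentiableOn two_ne_zero)
    (hg'.add (differentiableOn_id.smul_const a)) deriv_add_linear
  exact ⟨a, b, fun x hx ↦ (hb hx).trans (add_assoc _ _ _)⟩

theorem deriv_deriv_log_comp {f : ℝ → ℝ} {x : ℝ} (hf : ContDiffAt ℝ 2 f x) (hx : f x ≠ 0) :
    deriv (deriv fun t ↦ Real.log (f t)) x =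
      (deriv (deriv f) x * f x - deriv f x ^ 2) / f x ^ 2 := by
  have deriv_log_eq : (deriv fun t ↦ Real.log (f t)) =ᶠ[nhds x] fun t ↦ deriv f t / f t := by
    filter_upwards [hf.eventually (by simp), hf.continuousAt.eventually_ne hx] with t ht ht'
    exact deriv.log (ht.differentiableAt two_ne_zero) ht'
  have hf' : DifferentiableAt ℝ (deriv f) x :=
    (hf.derivWithin (m := 1) (by norm_num)).differentiableAt one_ne_zero
  rw [deriv_log_eq.deriv_eq, deriv_fun_div hf' (hf.differentiableAt two_ne_zero) hx, sq (deriv f x)]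

theorem pow_four_mul_eq_exp_of_log_sqrt_eq {l w x : ℝ} (hl : l ≠ 0) (hw : 0 < w)
    (h : Real.log √w = -2 * Real.log l + x) : l ^ 4 * w = Real.exp (2 * x) := by
  have hl4 : 0 < l ^ 4 := by positivity
  have log_eq : Real.log (l ^ 4 * w) = 2 * x := by
    rw [Real.log_sqrt hw.le] at h
    rw [Real.log_mul hl4.ne' hw.ne', Real.log_pow]
    push_cast
    linarith
  rw [← log_eq, Real.exp_log (mul_pos hl4 hw)]

/-- The Gaussian curvature of the special Liouville metric `lam(u)² (du² + dv²)`, as a function of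
`u`. -/
noncomputable def liouvilleCurvature (lam : ℝ → ℝ) (u : ℝ) : ℝ :=
  (-(lam u) * deriv (deriv lam) u + deriv lam u ^ 2) / lam u ^ 4

section Liouville

variable {lam : ℝ → ℝ}

theorem contDiffOn_liouvilleCurvature {I : Set ℝ} {n : WithTop ℕ∞} (hI : IsOpen I)
    (hlam : ContDiffOn ℝ (n + 2) lam I) (hne : ∀ u ∈ I, lam u ≠ 0) :
    ContDiffOn ℝ n (liouvilleCurvature lam) I := by
  have hlam₁ : ContDiffOn ℝ (n + 1) (deriv lam) I :=
    hlam.deriv_of_isOpen hI (by rw [add_assoc, one_add_one_eq_two])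
  have hlam₂ : ContDiffOn ℝ n (deriv (deriv lam)) I := hlam₁.deriv_of_isOpen hI le_rfl
  have hlam₀ : ContDiffOn ℝ n lam I := hlam.of_le le_self_add
  exact ((hlam₀.neg.mul hlam₂).add ((hlam₁.of_le le_self_add).pow 2)).div (hlam₀.pow 4)
    fun u hu ↦ pow_ne_zero 4 (hne u hu)

theorem deriv_deriv_log_eq_neg_sq_mul_liouvilleCurvature {u : ℝ} (hlam : ContDiffAt ℝ 2 lam u)
    (hne : lam u ≠ 0) :
    deriv (deriv fun t ↦ Real.log (lam t)) u = -(lam u ^ 2 * liouvilleCurvature lam u) := by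
  rw [deriv_deriv_log_comp hlam hne, liouvilleCurvature]
  field_simp
  ring

theorem stmt_1_general {I : Set ℝ} {c : ℝ} (hI : IsOpen I) (hI' : IsPreconnected I)
    (hlam : ContDiffOn ℝ 4 lam I) (hne : ∀ u ∈ I, lam u ≠ 0)
    (hK : ∀ u ∈ I, 0 < c - liouvilleCurvature lam u)
    (hRicci : ∀ u ∈ I,
      1 / lam u ^ 2 * deriv (deriv fun t ↦ Real.log √(c - liouvilleCurvature lam t)) u =
        2 * liouvilleCurvature lam u) :
    ∃ c₁ : ℝ, 0 < c₁ ∧ ∃ c₂ : ℝ, ∀ u ∈ I,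
      lam u ^ 4 * (c - liouvilleCurvature lam u) = c₁ * Real.exp (c₂ * u) := by
  have hlam₂ : ContDiffOn ℝ 2 lam I := hlam.of_le (by norm_num)
  have contDiffOn_log_sqrt :
      ContDiffOn ℝ 2 (fun u ↦ Real.log √(c - liouvilleCurvature lam u)) I :=
    ((contDiffOn_const.sub (contDiffOn_liouvilleCurvature hI (hlam.of_le (by norm_num)) hne)).sqrt
      fun u hu ↦ (hK u hu).ne').log fun u hu ↦ (Real.sqrt_pos.2 (hK u hu)).ne'
  have contDiffOn_log : ContDiffOn ℝ 2 (fun u ↦ -2 * Real.log (lam u)) I :=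
    contDiffOn_const.mul (hlam₂.log hne)
  have deriv_deriv_eq : I.EqOn (deriv (deriv fun u ↦ Real.log √(c - liouvilleCurvature lam u)))
      (deriv (deriv fun u ↦ -2 * Real.log (lam u))) := fun u hu ↦ by
    have ricci := hRicci u hu
    rw [one_div_mul_eq_div, div_eq_iff (pow_ne_zero 2 (hne u hu))] at ricci
    simp only [deriv_const_mul_field']
    rw [deriv_deriv_log_eq_neg_sq_mul_liouvilleCurvature
      (hlam₂.contDiffAt (hI.mem_nhds hu)) (hne u hu)]
    linarith
  obtain ⟨a, b, log_sqrt_eq⟩ := exists_eqOn_add_affine_of_deriv_deriv_eqOn hI hI'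
    contDiffOn_log_sqrt contDiffOn_log deriv_deriv_eq
  refine ⟨Real.exp (2 * b), Real.exp_pos _, 2 * a, fun u hu ↦ ?_⟩
  rw [pow_four_mul_eq_exp_of_log_sqrt_eq (hne u hu) (hK u hu) (log_sqrt_eq hu), ← Real.exp_add]
  congr 1
  rw [smul_eq_mul]
  ring

end Liouville

/-- If the conformal factor of a special Liouville metric satisfies the
Ricci condition, then `λ⁴(-2b² - K) = c₁ exp(c₂ u)` for some constants `c₁ > 0`, `c₂`. -/
theorem stmt_1 (I : Set ℝ) (hI : IsOpen I) (hI' : I.OrdConnected) (lam : ℝ → ℝ) (b : ℝ) (hb : 0 < b)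
    (hlam : ContDiffOn ℝ (⊤ : ℕ∞) lam (I))
    (hpos : ∀ u ∈ I, 0 < lam u)
    (K : ℝ → ℝ)
    (hK : ∀ u, K u =
      (-(lam u) * deriv (deriv lam) u + (deriv lam u) ^ 2) / (lam u) ^ 4)
    (hKneg : ∀ u ∈ I, 0 < -2 * b ^ 2 - K u)
    (hRicci : ∀ u ∈ I,
      (1 / (lam u) ^ 2) *
        deriv (deriv (fun t => Real.log (Real.sqrt (-2 * b ^ 2 - K t)))) u = 2 * K u) :
    ∃ c₁ : ℝ, 0 < c₁ ∧ ∃ c₂ : ℝ, ∀ u ∈ I,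
      (lam u) ^ 4 * (-2 * b ^ 2 - K u) = c₁ * Real.exp (c₂ * u) := by
  obtain rfl : K = liouvilleCurvature lam := funext hK
  exact stmt_1_general hI hI'.isPreconnected (contDiffOn_infty.1 hlam 4)
    (fun u hu ↦ (hpos u hu).ne') hKneg hRicci
end

section
/- Let b > 0, c₁ > 0, c₂ ∈ ℝ, and set s = √(c₂² + 8b²c₁) and λ₊ = (−c₂ + s)/(4b²). Let I ⊆ ℝ be an open interval and λ : I → ℝ a smooth positive function satisfying both λ''(u)·λ(u) − λ'(u)² = c₁ + 2b²·λ(u)⁴ and λ'(u)² = −c₁ + c₂·λ(u)² + 2b²·λ(u)⁴ on I. If θ : I → ℝ is a smooth function with cos θ(u) = √λ₊ / λ(u) for all u ∈ I, then θ'(u)² = s − ((c₂ + s)/2)·sin² θ(u) for all u ∈ I. -/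
/-!
Put `r = √λ₊` and `a = 2b²`, so that `c₁ = a r⁴ + c₂ r²` and the first integral factors as
`λ'² = (λ² - r²)(a λ² + a r² + c₂)`. Differentiating `λ cos θ = r` gives
`λ θ' sin θ = λ' cos θ`; squaring and using `λ² sin² θ = λ² - r²` determines `θ'²` wherever
`sin θ ≠ 0`. Where `sin θ = 0` this relation is void: differentiating it once more gives
`λ'' = θ'² λ`, and there the curvature equation, with `λ' = 0` and `λ² = r²`, determines `θ'²`.
-/

open Filter Topology

lemma hasDerivAt_mul_of_eq_zero {𝕜 : Type*} [NontriviallyNormedField 𝕜] {f g : 𝕜 → 𝕜} {f' x : 𝕜}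
    (hf : HasDerivAt f f' x) (hfx : f x = 0) (hg : ContinuousAt g x) :
    HasDerivAt (fun y => f y * g y) (f' * g x) x := by
  rw [hasDerivAt_iff_tendsto_slope] at hf ⊢
  refine (hf.mul (hg.tendsto.mono_left nhdsWithin_le_nhds)).congr fun y => ?_
  simp only [slope_def_field, hfx]
  ring

section QuadraticRoot

variable {a p q : ℝ}

lemma quadratic_plus_root_eq (ha : a ≠ 0) (hdisc : 0 ≤ p ^ 2 + 4 * a * q) :
    a * ((-p + √(p ^ 2 + 4 * a * q)) / (2 * a)) ^ 2 +
      p * ((-p + √(p ^ 2 + 4 * a * q)) / (2 * a)) = q := by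
  have hdiscrim : discrim a p (-q) = √(p ^ 2 + 4 * a * q) * √(p ^ 2 + 4 * a * q) := by
    rw [Real.mul_self_sqrt hdisc, discrim]
    ring
  linear_combination (quadratic_eq_zero_iff ha hdiscrim _).2 (Or.inl rfl)

lemma quadratic_plus_root_pos (ha : 0 < a) (hq : 0 < q) :
    0 < (-p + √(p ^ 2 + 4 * a * q)) / (2 * a) := by
  have hp : p < √(p ^ 2 + 4 * a * q) :=
    Real.lt_sqrt_of_sq_lt (lt_add_of_pos_right _ (by positivity))
  exact div_pos (by linarith) (by positivity)

end QuadraticRoot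

section AngleOfCosMul

variable {θ lam : ℝ → ℝ} {r u : ℝ}

lemma sin_mul_deriv_mul_eq_cos_mul_deriv {θ' lam' : ℝ} (hθ : HasDerivAt θ θ' u)
    (hlam : HasDerivAt lam lam' u) (hr : ∀ᶠ v in 𝓝 u, Real.cos (θ v) * lam v = r) :
    Real.sin (θ u) * (θ' * lam u) = Real.cos (θ u) * lam' := by
  have hderiv := (hθ.cos.mul hlam).unique ((hasDerivAt_const u r).congr_of_eventuallyEq hr)
  linear_combination -hderiv

lemma second_deriv_eq_deriv_sq_mul_of_sin_eq_zero {θ' lam' : ℝ → ℝ} {lam'' : ℝ}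
    (hθ : ∀ᶠ v in 𝓝 u, HasDerivAt θ (θ' v) v) (hθ' : ContinuousAt θ' u)
    (hlam : ∀ᶠ v in 𝓝 u, HasDerivAt lam (lam' v) v) (hlam' : HasDerivAt lam' lam'' u)
    (hr : ∀ᶠ v in 𝓝 u, Real.cos (θ v) * lam v = r) (hsin : Real.sin (θ u) = 0) :
    lam'' = θ' u ^ 2 * lam u := by
  have hrel : ∀ᶠ v in 𝓝 u,
      Real.cos (θ v) * lam' v = Real.sin (θ v) * (θ' v * lam v) := by
    filter_upwards [hθ, hlam, hr.eventually_nhds] with v hθv hlamv hrv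
    exact (sin_mul_deriv_mul_eq_cos_mul_deriv hθv hlamv hrv).symm
  have hsin_deriv : HasDerivAt (fun v => Real.sin (θ v) * (θ' v * lam v))
      (Real.cos (θ u) * θ' u * (θ' u * lam u)) u :=
    hasDerivAt_mul_of_eq_zero hθ.self_of_nhds.sin hsin (hθ'.mul hlam.self_of_nhds.continuousAt)
  have hderiv := (hθ.self_of_nhds.cos.mul hlam').unique (hsin_deriv.congr_of_eventuallyEq hrel)
  have hcos : Real.cos (θ u) ≠ 0 := fun h => by
    simpa [hsin, h] using Real.sin_sq_add_cos_sq (θ u)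
  apply mul_left_cancel₀ hcos
  linear_combination hderiv + θ' u * lam' u * hsin

end AngleOfCosMul

section AngleEquation

variable {a c₂ r s θ θ' lam lam' : ℝ}

lemma angle_deriv_sq_of_sin_ne_zero (hs : s = c₂ + 2 * a * r ^ 2) (hlam : lam ≠ 0)
    (hr : Real.cos θ * lam = r) (hrel : Real.sin θ * (θ' * lam) = Real.cos θ * lam')
    (hintegral : lam' ^ 2 = (lam ^ 2 - r ^ 2) * (a * lam ^ 2 + a * r ^ 2 + c₂))
    (hsin : Real.sin θ ≠ 0) :
    θ' ^ 2 = s - (c₂ + s) / 2 * Real.sin θ ^ 2 := by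
  have hsin_lam : (Real.sin θ * lam) ^ 2 = lam ^ 2 - r ^ 2 := by
    rw [← hr, mul_pow, mul_pow, Real.sin_sq]
    ring
  have hsq : θ' ^ 2 = Real.cos θ ^ 2 * (a * lam ^ 2 + a * r ^ 2 + c₂) := by
    apply mul_left_cancel₀ (pow_ne_zero 2 (mul_ne_zero hsin hlam))
    calc (Real.sin θ * lam) ^ 2 * θ' ^ 2
        = (Real.cos θ * lam') ^ 2 := by rw [← hrel]; ring
      _ = (Real.sin θ * lam) ^ 2 * (Real.cos θ ^ 2 * (a * lam ^ 2 + a * r ^ 2 + c₂)) := by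
        rw [mul_pow, hintegral, hsin_lam]; ring
  rw [hsq, hs, Real.sin_sq, ← hr]
  ring

lemma angle_deriv_sq_of_sin_eq_zero {lam'' : ℝ} (hs : s = c₂ + 2 * a * r ^ 2) (hlam : lam ≠ 0)
    (hr : Real.cos θ * lam = r) (hrel : Real.sin θ * (θ' * lam) = Real.cos θ * lam')
    (hlam'' : lam'' = θ' ^ 2 * lam)
    (hcurv : lam'' * lam - lam' ^ 2 = a * (r ^ 2) ^ 2 + c₂ * r ^ 2 + a * lam ^ 4)
    (hsin : Real.sin θ = 0) :
    θ' ^ 2 = s - (c₂ + s) / 2 * Real.sin θ ^ 2 := by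
  have hcos : Real.cos θ ^ 2 = 1 := by rw [Real.cos_sq', hsin]; ring
  have hlam' : lam' = 0 := by
    linear_combination -lam' * hcos - Real.cos θ * hrel + Real.cos θ * (θ' * lam) * hsin
  have hlam_sq : lam ^ 2 = r ^ 2 := by rw [← hr, mul_pow, hcos, one_mul]
  apply mul_right_cancel₀ (pow_ne_zero 2 hlam)
  calc θ' ^ 2 * lam ^ 2
      = lam'' * lam - lam' ^ 2 := by rw [hlam'', hlam']; ring
    _ = a * (r ^ 2) ^ 2 + c₂ * r ^ 2 + a * (lam ^ 2) ^ 2 := by rw [hcurv]; ring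
    _ = (s - (c₂ + s) / 2 * Real.sin θ ^ 2) * lam ^ 2 := by rw [hlam_sq, hs, hsin]; ring

end AngleEquation

theorem stmt_5_general {a c₁ c₂ r s : ℝ} (hroot : a * (r ^ 2) ^ 2 + c₂ * r ^ 2 = c₁)
    (hs : s = c₂ + 2 * a * r ^ 2) {I : Set ℝ} (hI : IsOpen I) {lam θ : ℝ → ℝ}
    (hlam : ContDiffOn ℝ 2 lam I) (hne : ∀ u ∈ I, lam u ≠ 0)
    (hODE1 : ∀ u ∈ I, deriv (deriv lam) u * lam u - deriv lam u ^ 2 = c₁ + a * lam u ^ 4)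
    (hODE2 : ∀ u ∈ I, deriv lam u ^ 2 = -c₁ + c₂ * lam u ^ 2 + a * lam u ^ 4)
    (hθ : ContDiffOn ℝ 1 θ I) (hcosθ : ∀ u ∈ I, Real.cos (θ u) = r / lam u) :
    ∀ u ∈ I, deriv θ u ^ 2 = s - (c₂ + s) / 2 * Real.sin (θ u) ^ 2 := by
  subst hroot
  intro u hu
  have near_u : ∀ᶠ v in 𝓝 u, v ∈ I := hI.mem_nhds hu
  have hθ_deriv : ∀ᶠ v in 𝓝 u, HasDerivAt θ (deriv θ v) v := near_u.mono fun v hv =>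
    ((hθ.differentiableOn one_ne_zero).differentiableAt (hI.mem_nhds hv)).hasDerivAt
  have hlam_deriv : ∀ᶠ v in 𝓝 u, HasDerivAt lam (deriv lam v) v := near_u.mono fun v hv =>
    ((hlam.differentiableOn two_ne_zero).differentiableAt (hI.mem_nhds hv)).hasDerivAt
  have hr : ∀ᶠ v in 𝓝 u, Real.cos (θ v) * lam v = r := near_u.mono fun v hv => by
    rw [hcosθ v hv, div_mul_cancel₀ _ (hne v hv)]
  have hrel := sin_mul_deriv_mul_eq_cos_mul_deriv hθ_deriv.self_of_nhds hlam_deriv.self_of_nhds hr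
  by_cases hsin : Real.sin (θ u) = 0
  · have hθ_cont : ContinuousAt (deriv θ) u :=
      (hθ.continuousOn_deriv_of_isOpen hI le_rfl).continuousAt (hI.mem_nhds hu)
    have hlam_deriv₂ : HasDerivAt (deriv lam) (deriv (deriv lam) u) u :=
      (((hlam.deriv_of_isOpen (m := 1) hI one_add_one_eq_two.le).differentiableOn
        one_ne_zero).differentiableAt (hI.mem_nhds hu)).hasDerivAt
    have hlam'' := second_deriv_eq_deriv_sq_mul_of_sin_eq_zero
      hθ_deriv hθ_cont hlam_deriv hlam_deriv₂ hr hsin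
    exact angle_deriv_sq_of_sin_eq_zero hs (hne u hu) hr.self_of_nhds hrel hlam''
      (hODE1 u hu) hsin
  · have hintegral : deriv lam u ^ 2 = (lam u ^ 2 - r ^ 2) * (a * lam u ^ 2 + a * r ^ 2 + c₂) := by
      rw [hODE2 u hu]; ring
    exact angle_deriv_sq_of_sin_ne_zero hs (hne u hu) hr.self_of_nhds hrel hintegral hsin

/-- Substituting `cos θ = √λ₊ / λ` into the first integral of the curvature
equation yields `θ'² = s - ((c₂ + s)/2) sin²θ`, where `s = √(c₂² + 8b²c₁)`. -/
theorem stmt_5 (b c₁ c₂ s lamPlus : ℝ) (hb : 0 < b) (hc₁ : 0 < c₁)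
    (hs : s = Real.sqrt (c₂ ^ 2 + 8 * b ^ 2 * c₁))
    (hlamPlus : lamPlus = (-c₂ + s) / (4 * b ^ 2))
    (I : Set ℝ) (hI : IsOpen I) (hI' : I.OrdConnected) (lam : ℝ → ℝ)
    (hlam : ContDiffOn ℝ (⊤ : ℕ∞) lam (I))
    (hpos : ∀ u ∈ I, 0 < lam u)
    (hODE1 : ∀ u ∈ I,
      deriv (deriv lam) u * lam u - (deriv lam u) ^ 2 = c₁ + 2 * b ^ 2 * (lam u) ^ 4)
    (hODE2 : ∀ u ∈ I,
      (deriv lam u) ^ 2 = -c₁ + c₂ * (lam u) ^ 2 + 2 * b ^ 2 * (lam u) ^ 4)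
    (θ : ℝ → ℝ) (hθ : ContDiffOn ℝ (⊤ : ℕ∞) θ (I))
    (hcosθ : ∀ u ∈ I, Real.cos (θ u) = Real.sqrt lamPlus / lam u) :
    ∀ u ∈ I,
      (deriv θ u) ^ 2 = s - ((c₂ + s) / 2) * Real.sin (θ u) ^ 2 := by
  have hlamPlus_eq : lamPlus = (-c₂ + √(c₂ ^ 2 + 4 * (2 * b ^ 2) * c₁)) / (2 * (2 * b ^ 2)) := by
    rw [hlamPlus, hs]; ring_nf
  have hlamPlus_pos : 0 < lamPlus :=
    hlamPlus_eq ▸ quadratic_plus_root_pos (by positivity) hc₁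
  have hroot : 2 * b ^ 2 * lamPlus ^ 2 + c₂ * lamPlus = c₁ :=
    hlamPlus_eq ▸ quadratic_plus_root_eq (by positivity) (by positivity)
  have hs_eq : s = c₂ + 2 * (2 * b ^ 2) * lamPlus := by rw [hlamPlus]; field_simp; ring
  have hr : √lamPlus ^ 2 = lamPlus := Real.sq_sqrt hlamPlus_pos.le
  exact stmt_5_general (by rwa [hr]) (by rwa [hr]) hI (hlam.of_le (by norm_cast))
    (fun u hu => (hpos u hu).ne') hODE1 hODE2 (hθ.of_le (by norm_cast)) hcosθ
end

section
/- Let I ⊆ ℝ be an open interval, λ : I → ℝ smooth with λ(u) > 0 on I, and b > 0. Define K(u) = (−λ(u)λ''(u) + λ'(u)²)/λ(u)⁴ and assume K(u) < −2b² on I and that λ(u)⁴·(−2b² − K(u)) is equal to a constant c₁ > 0 on I. Then there exists a constant c₂ ∈ ℝ such that, setting s = √(c₂² + 8b²c₁), λ₊ = (−c₂ + s)/(4b²), and k² = (c₂ + s)/(2s), there is a smooth function θ : I → ℝ with cos θ(u) > 0, θ'(u)² = s·(1 − k²·sin² θ(u)), and λ(u) = √λ₊ / cos θ(u) for all u ∈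 I. -/
/-! With `a = 2b²`, the hypothesis on the curvature is the equation `λλ'' = λ'² + aλ⁴ + c₁`. It has
the first integral `c₂ = (λ'/λ)² - aλ² + c₁/λ²`, so `λ'² = aλ⁴ + c₂λ² - c₁`. As `a, c₁ > 0`, the
quadratic `aX² + c₂X - c₁` has one positive and one negative root and factors as `a(X - p)(X + q)`
with `p, q > 0`; here `p = λ₊`, `a(p + q) = s` and `q / (p + q) = k²`. Then
`1 + λ'² / (ap(λ² + q)) = λ² / p`, so the angle `θ` with `tan θ = λ' / √(ap(λ² + q))` satisfies
`λ = √p / cos θ`, and differentiating `tan θ` gives `θ' = √(ap(λ² + q)) / λ`. -/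

namespace SpecialLiouville

open Real

section Algebra

variable {a c e p q x y z : ℝ}

theorem pow_four_mul_sub_curvature_eq_iff (hx : x ≠ 0) :
    x ^ 4 * (-a - (-x * z + y ^ 2) / x ^ 4) = c ↔ x * z = y ^ 2 + a * x ^ 4 + c := by
  have expand : x ^ 4 * (-a - (-x * z + y ^ 2) / x ^ 4) = x * z - y ^ 2 - a * x ^ 4 := by
    field_simp
    ring
  rw [expand]
  constructor <;> intro h <;> linarith

/-- The first integral of `f * f'' = f' ^ 2 + a * f ^ 4 + c`, as a function on the phase plane with
coordinates `x = f` and `y = f'` (position and velocity). -/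
noncomputable def firstIntegral (a c x y : ℝ) : ℝ :=
  (y / x) ^ 2 - a * x ^ 2 + c / x ^ 2

theorem firstIntegral_eq_iff (hx : x ≠ 0) :
    firstIntegral a c x y = e ↔ y ^ 2 = a * x ^ 4 + e * x ^ 2 - c := by
  have clear_denom : firstIntegral a c x y * x ^ 2 = y ^ 2 - a * x ^ 4 + c := by
    unfold firstIntegral
    field_simp
  rw [← mul_left_inj' (pow_ne_zero 2 hx), clear_denom]
  constructor <;> intro h <;> linarith

theorem exists_pos_factorization (ha : 0 < a) (hc : 0 < c) (e : ℝ) :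
    ∃ p q : ℝ, 0 < p ∧ 0 < q ∧ a * (q - p) = e ∧ a * p * q = c := by
  obtain ⟨s, hs, hes⟩ : ∃ s, s ^ 2 = e ^ 2 + 4 * (a * c) ∧ |e| < s := by
    have hac : 0 < a * c := mul_pos ha hc
    exact ⟨√(e ^ 2 + 4 * (a * c)), sq_sqrt (by positivity),
      lt_sqrt_of_sq_lt (by rw [sq_abs]; linarith)⟩
  obtain ⟨neg_lt, lt⟩ := abs_lt.mp hes
  refine ⟨(-e + s) / (2 * a), (e + s) / (2 * a),
    div_pos (by linarith) (by positivity), div_pos (by linarith) (by positivity), ?_, ?_⟩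
  · field_simp
    ring
  · field_simp
    linear_combination hs

theorem sqrt_discrim_eq (ha : 0 ≤ a) (hp : 0 ≤ p) (hq : 0 ≤ q) :
    √((a * (q - p)) ^ 2 + 4 * a * (a * p * q)) = a * (p + q) := by
  rw [show (a * (q - p)) ^ 2 + 4 * a * (a * p * q) = (a * (p + q)) ^ 2 by ring]
  exact sqrt_sq (by positivity)

/-- The angle `θ` with `x = √p / cos θ` at a point `(x, y)` of the curve
`y ^ 2 = a * (x ^ 2 - p) * (x ^ 2 + q)` with `0 < x`; the sign of `θ` is that of `y`. -/
noncomputable def amplitude (a p q x y : ℝ) : ℝ :=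
  arctan (y / √(a * p * (x ^ 2 + q)))

theorem one_add_div_sqrt_sq (ha : 0 < a) (hp : 0 < p) (hq : 0 < q)
    (hy : y ^ 2 = a * (x ^ 2 - p) * (x ^ 2 + q)) :
    1 + (y / √(a * p * (x ^ 2 + q))) ^ 2 = x ^ 2 / p := by
  have hxq : x ^ 2 + q ≠ 0 := by positivity
  rw [div_pow, sq_sqrt (by positivity), hy]
  field_simp
  ring

theorem cos_amplitude (ha : 0 < a) (hp : 0 < p) (hq : 0 < q) (hx : 0 ≤ x)
    (hy : y ^ 2 = a * (x ^ 2 - p) * (x ^ 2 + q)) :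
    cos (amplitude a p q x y) = √p / x := by
  rw [amplitude, cos_arctan, one_add_div_sqrt_sq ha hp hq hy, sqrt_div (sq_nonneg x), sqrt_sq hx,
    one_div_div]

theorem sq_sqrt_div_eq_sin_amplitude (ha : 0 < a) (hp : 0 < p) (hq : 0 < q) (hx : 0 < x)
    (hy : y ^ 2 = a * (x ^ 2 - p) * (x ^ 2 + q)) :
    (√(a * p * (x ^ 2 + q)) / x) ^ 2 =
      a * (p + q) * (1 - q / (p + q) * sin (amplitude a p q x y) ^ 2) := by
  rw [sin_sq, cos_amplitude ha hp hq hx.le hy, div_pow, div_pow, sq_sqrt hp.le,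
    sq_sqrt (by positivity)]
  field_simp
  ring

end Algebra

section Calculus

variable {a c p q u z : ℝ} {f g : ℝ → ℝ} {I : Set ℝ}

theorem hasDerivAt_firstIntegral (hf : HasDerivAt f (g u) u) (hg : HasDerivAt g z u)
    (hfu : f u ≠ 0) :
    HasDerivAt (fun v => firstIntegral a c (f v) (g v))
      (2 * g u / f u ^ 3 * (f u * z - (g u ^ 2 + a * f u ^ 4 + c))) u := by
  have h := (((hg.fun_div hf hfu).fun_pow 2).fun_sub ((hf.fun_pow 2).const_mul a)).fun_add
    ((hasDerivAt_const u c).fun_div (hf.fun_pow 2) (pow_ne_zero 2 hfu))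
  refine h.congr_deriv ?_
  simp only [Nat.cast_ofNat, Nat.add_one_sub_one, pow_one]
  field_simp
  ring

theorem exists_firstIntegral_eq (hI : IsOpen I) (hI' : IsPreconnected I)
    (hf : DifferentiableOn ℝ f I) (hf' : DifferentiableOn ℝ (deriv f) I) (hf0 : ∀ u ∈ I, f u ≠ 0)
    (ode : ∀ u ∈ I, f u * deriv (deriv f) u = deriv f u ^ 2 + a * f u ^ 4 + c) :
    ∃ e, ∀ u ∈ I, firstIntegral a c (f u) (deriv f u) = e := by
  have hderiv (u) (hu : u ∈ I) :
      HasDerivAt (fun v => firstIntegral a c (f v) (deriv f v)) 0 u := by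
    have h := hasDerivAt_firstIntegral (a := a) (c := c)
      (hf.hasDerivAt (hI.mem_nhds hu)) (hf'.hasDerivAt (hI.mem_nhds hu)) (hf0 u hu)
    rwa [ode u hu, sub_self, mul_zero] at h
  exact hI.exists_is_const_of_deriv_eq_zero hI'
    (fun u hu => (hderiv u hu).differentiableAt.differentiableWithinAt)
    (fun u hu => (hderiv u hu).deriv)

theorem hasDerivAt_amplitude (ha : 0 < a) (hp : 0 < p) (hq : 0 < q)
    (hf : HasDerivAt f (g u) u) (hg : HasDerivAt g z u) (hfu : f u ≠ 0)
    (ode : f u * z = g u ^ 2 + a * f u ^ 4 + a * p * q)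
    (hgu : g u ^ 2 = a * (f u ^ 2 - p) * (f u ^ 2 + q)) :
    HasDerivAt (fun v => amplitude a p q (f v) (g v)) (√(a * p * (f u ^ 2 + q)) / f u) u := by
  have hpos : 0 < a * p * (f u ^ 2 + q) := by positivity
  have h := (hg.fun_div ((((hf.fun_pow 2).add_const q).const_mul (a * p)).sqrt hpos.ne')
    (sqrt_pos.mpr hpos).ne').arctan
  refine h.congr_deriv ?_
  simp only [one_add_div_sqrt_sq ha hp hq hgu, Nat.cast_ofNat, Nat.add_one_sub_one, pow_one]
  have hA : √(a * p * (f u ^ 2 + q)) ^ 2 = a * p * (f u ^ 2 + q) := sq_sqrt hpos.le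
  have hA0 : √(a * p * (f u ^ 2 + q)) ≠ 0 := (sqrt_pos.mpr hpos).ne'
  generalize √(a * p * (f u ^ 2 + q)) = A at hA hA0 ⊢
  have hz : z = 2 * a * f u ^ 3 + a * (q - p) * f u :=
    mul_left_cancel₀ hfu (by rw [ode, hgu]; ring)
  have key : p * (z * A ^ 2 - a * p * f u * g u ^ 2) = f u * (A ^ 2) ^ 2 := by
    rw [hz, hA, hgu]
    ring
  field_simp
  linear_combination key

theorem contDiffOn_amplitude {n : WithTop ℕ∞} (ha : 0 < a) (hp : 0 < p) (hq : 0 < q)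
    (hf : ContDiffOn ℝ n f I) (hg : ContDiffOn ℝ n g I) :
    ContDiffOn ℝ n (fun v => amplitude a p q (f v) (g v)) I := by
  have hpos (v : ℝ) : 0 < a * p * (f v ^ 2 + q) := by positivity
  exact contDiff_arctan.comp_contDiffOn <| hg.div
    ((contDiffOn_const.mul ((hf.pow 2).add contDiffOn_const)).sqrt fun v _ => (hpos v).ne')
    fun v _ => (sqrt_pos.mpr (hpos v)).ne'

end Calculus

end SpecialLiouville

open SpecialLiouville in
theorem stmt_9_general {n : WithTop ℕ∞} (hn : n ≠ 0) (b c₁ : ℝ) (I : Set ℝ) (hI : IsOpen I)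
    (hI' : IsPreconnected I) (hb : b ≠ 0) (hc₁ : 0 < c₁)
    (lam : ℝ → ℝ) (hlam : ContDiffOn ℝ (n + 1) lam I)
    (hpos : ∀ u ∈ I, 0 < lam u)
    (K : ℝ → ℝ)
    (hK : ∀ u ∈ I, K u =
      (-(lam u) * deriv (deriv lam) u + (deriv lam u) ^ 2) / (lam u) ^ 4)
    (hconst : ∀ u ∈ I, (lam u) ^ 4 * (-2 * b ^ 2 - K u) = c₁) :
    ∃ c₂ : ℝ, ∃ θ : ℝ → ℝ,
      ContDiffOn ℝ n θ I ∧
      ∀ u ∈ I,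
        0 < Real.cos (θ u) ∧
        (deriv θ u) ^ 2 = Real.sqrt (c₂ ^ 2 + 8 * b ^ 2 * c₁) *
          (1 - ((c₂ + Real.sqrt (c₂ ^ 2 + 8 * b ^ 2 * c₁)) /
              (2 * Real.sqrt (c₂ ^ 2 + 8 * b ^ 2 * c₁))) * Real.sin (θ u) ^ 2) ∧
        lam u = Real.sqrt ((-c₂ + Real.sqrt (c₂ ^ 2 + 8 * b ^ 2 * c₁)) / (4 * b ^ 2)) /
          Real.cos (θ u) := by
  have ha : 0 < 2 * b ^ 2 := by positivity
  obtain ⟨hd, -, hlam'⟩ := (contDiffOn_succ_iff_deriv_of_isOpen hI).mp hlam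
  have hd' := hlam'.differentiableOn hn
  have ode (u) (hu : u ∈ I) :
      lam u * deriv (deriv lam) u = deriv lam u ^ 2 + 2 * b ^ 2 * lam u ^ 4 + c₁ := by
    rw [← pow_four_mul_sub_curvature_eq_iff (hpos u hu).ne', ← hK u hu, ← hconst u hu, neg_mul]
  obtain ⟨c₂, hc₂⟩ := exists_firstIntegral_eq hI hI' hd hd' (fun u hu => (hpos u hu).ne') ode
  obtain ⟨p, q, hp, hq, rfl, rfl⟩ := exists_pos_factorization ha hc₁ c₂
  have hderiv (u) (hu : u ∈ I) :
      deriv lam u ^ 2 = 2 * b ^ 2 * (lam u ^ 2 - p) * (lam u ^ 2 + q) := by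
    rw [(firstIntegral_eq_iff (hpos u hu).ne').mp (hc₂ u hu)]
    ring
  refine ⟨2 * b ^ 2 * (q - p), fun u => amplitude (2 * b ^ 2) p q (lam u) (deriv lam u),
    contDiffOn_amplitude ha hp hq (hlam.of_le le_self_add) hlam', fun u hu => ?_⟩
  have hk : (2 * b ^ 2 * (q - p) + 2 * b ^ 2 * (p + q)) / (2 * (2 * b ^ 2 * (p + q))) =
      q / (p + q) := by field_simp; ring
  have hroot : (-(2 * b ^ 2 * (q - p)) + 2 * b ^ 2 * (p + q)) / (4 * b ^ 2) = p := by
    field_simp; ring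
  have hθ := hasDerivAt_amplitude ha hp hq (hd.hasDerivAt (hI.mem_nhds hu))
    (hd'.hasDerivAt (hI.mem_nhds hu)) (hpos u hu).ne' (ode u hu) (hderiv u hu)
  rw [show 8 * b ^ 2 = 4 * (2 * b ^ 2) by ring, sqrt_discrim_eq ha.le hp.le hq.le, hk, hroot,
    hθ.deriv, cos_amplitude ha hp hq (hpos u hu).le (hderiv u hu),
    div_div_cancel₀ (Real.sqrt_pos.mpr hp).ne']
  exact ⟨div_pos (Real.sqrt_pos.mpr hp) (hpos u hu),
    sq_sqrt_div_eq_sin_amplitude ha hp hq (hpos u hu) (hderiv u hu), rfl⟩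

/-- If the curvature `K` of a special Liouville metric satisfies `K < -2b²`
and `λ⁴(-2b² - K) = c₁` identically, then there are a constant `c₂` and a smooth function
`θ` with `cos θ > 0`, `θ'² = s(1 - k² sin²θ)` and `λ = √λ₊ / cos θ`, where
`s = √(c₂² + 8b²c₁)`, `λ₊ = (-c₂ + s)/(4b²)` and `k² = (c₂ + s)/(2s)`. -/
theorem stmt_9 (b c₁ : ℝ) (I : Set ℝ) (hI : IsOpen I) (hI' : I.OrdConnected) (hb : 0 < b) (hc₁ : 0 < c₁)
    (lam : ℝ → ℝ) (hlam : ContDiffOn ℝ (⊤ : ℕ∞) lam (I))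
    (hpos : ∀ u ∈ I, 0 < lam u)
    (K : ℝ → ℝ)
    (hK : ∀ u, K u =
      (-(lam u) * deriv (deriv lam) u + (deriv lam u) ^ 2) / (lam u) ^ 4)
    (hKlt : ∀ u ∈ I, K u < -2 * b ^ 2)
    (hconst : ∀ u ∈ I, (lam u) ^ 4 * (-2 * b ^ 2 - K u) = c₁) :
    ∃ c₂ : ℝ, ∃ θ : ℝ → ℝ,
      ContDiffOn ℝ (⊤ : ℕ∞) θ (I) ∧
      ∀ u ∈ I,
        0 < Real.cos (θ u) ∧
        (deriv θ u) ^ 2 = Real.sqrt (c₂ ^ 2 + 8 * b ^ 2 * c₁) *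
          (1 - ((c₂ + Real.sqrt (c₂ ^ 2 + 8 * b ^ 2 * c₁)) /
              (2 * Real.sqrt (c₂ ^ 2 + 8 * b ^ 2 * c₁))) * Real.sin (θ u) ^ 2) ∧
        lam u = Real.sqrt ((-c₂ + Real.sqrt (c₂ ^ 2 + 8 * b ^ 2 * c₁)) / (4 * b ^ 2)) /
          Real.cos (θ u) :=
  stmt_9_general (by simp) b c₁ I hI hI'.isPreconnected hb.ne' hc₁ lam (by simpa using hlam) hpos K
    (fun u _ => hK u) hconst
end
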